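/- (Strict contraction of the total Jacobian.) Let N be a positive integer, let T_0, …, T_{N−1} be d×d complex matrices, let t_0, …, t_{N−1} ∈ [0,1), and suppose there exists γ ∈ [0,1) with ‖T_n‖₂ ≤ γ for all n. Define J^{(0)} = I and J^{(i+1)} = t_i I + (1 − t_i) T_i J^{(i)} for i = 0, …, N−1. Then the total Jacobian is strictly contractive: ‖J^{(N)}‖₂ < 1. -/

import Mathlib

open scoped Matrix.Norms.L2Operator

/-- The Jacobian recursion `J⁽⁰⁾ = I`, `J⁽ⁱ⁺¹⁾ = t_i I + (1 − t_i) T_i J⁽ⁱ⁾`. -/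
noncomputable def jacRec {d : ℕ} (T : ℕ → Matrix (Fin d) (Fin d) ℂ) (t : ℕ → ℝ) :
    ℕ → Matrix (Fin d) (Fin d) ℂ
  | 0 => 1
  | i + 1 => t i • (1 : Matrix (Fin d) (Fin d) ℂ) + (1 - t i) • (T i * jacRec T t i)

theorem l2_norm_one_le (d : ℕ) : ‖(1 : Matrix (Fin d) (Fin d) ℂ)‖ ≤ 1 := by
  rcases subsingleton_or_nontrivial (Matrix (Fin d) (Fin d) ℂ) with h | h
  · rw [Subsingleton.elim (1 : Matrix (Fin d) (Fin d) ℂ) 0, norm_zero]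
    exact zero_le_one
  · exact (CStarRing.norm_one).le

theorem jacRec_step {d : ℕ} (A J : Matrix (Fin d) (Fin d) ℂ) (s γ : ℝ)
    (hs : s ∈ Set.Ico (0 : ℝ) 1) (hγ : γ ∈ Set.Ico (0 : ℝ) 1) (hA : ‖A‖ ≤ γ) (hJ : ‖J‖ ≤ 1) :
    ‖s • (1 : Matrix (Fin d) (Fin d) ℂ) + (1 - s) • (A * J)‖ < 1 := by
  obtain ⟨hs0, hs1⟩ := hs
  obtain ⟨hg0, hg1⟩ := hγ
  have h1 : ‖A * J‖ ≤ γ := by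
    calc ‖A * J‖ ≤ ‖A‖ * ‖J‖ := norm_mul_le _ _
      _ ≤ γ * 1 := mul_le_mul hA hJ (norm_nonneg _) hg0
      _ = γ := mul_one _
  have h2 := norm_add_le (s • (1 : Matrix (Fin d) (Fin d) ℂ)) ((1 - s) • (A * J))
  rw [norm_smul, norm_smul, Real.norm_of_nonneg hs0,
    Real.norm_of_nonneg (sub_nonneg.2 hs1.le)] at h2
  have h3 := mul_le_mul_of_nonneg_left (l2_norm_one_le d) hs0
  have h4 := mul_lt_mul_of_pos_left (h1.trans_lt hg1) (sub_pos.2 hs1)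
  linarith

/-- **Strict contraction of the total Jacobian.**  If `t_n ∈ [0,1)` and there is `γ ∈ [0,1)`
with `‖T_n‖₂ ≤ γ` for all `n`, then `‖J⁽ᴺ⁾‖₂ < 1`. -/
theorem total_jacobian_strict_contraction {d N : ℕ} (hN : 0 < N)
    (T : ℕ → Matrix (Fin d) (Fin d) ℂ)
    (t : ℕ → ℝ) (ht : ∀ n < N, t n ∈ Set.Ico (0 : ℝ) 1)
    (γ : ℝ) (hγ : γ ∈ Set.Ico (0 : ℝ) 1) (hT : ∀ n < N, ‖T n‖ ≤ γ) :
    ‖jacRec T t N‖ < 1 := by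
  have key : ∀ n ≤ N, ‖jacRec T t n‖ ≤ 1 := by
    intro n
    induction n with
    | zero => intro _; exact l2_norm_one_le d
    | succ k ih =>
      intro hk
      exact (jacRec_step (T k) _ (t k) γ (ht k hk) hγ (hT k hk) (ih (Nat.le_of_succ_le hk))).le
  obtain ⟨k, rfl⟩ := Nat.exists_eq_succ_of_ne_zero hN.ne'
  exact jacRec_step (T k) _ (t k) γ (ht k k.lt_succ_self) hγ (hT k k.lt_succ_self)
    (key k k.le_succ)
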